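/- arXiv:2206.02078 — 3 statements merged into one kernel-verified Lean document; each statement's English description precedes it below -/
import Mathlib

section
/- (Number of rounds per stage of SRPFL.) Let 0 < a ≤ 1/4 and set s := √(1−a). Let C ≥ 0 and 0 ≤ T_{r−1} < T_r < T_{r+1} be real numbers with T_{r−1} + C > 0, and define X_r := (a/(√(2^{r−1}·(1−a))·(1−s))) · (1 + (T_{r−1} + C)·(1 − 1/√2)/(T_r − T_{r−1})) and X_{r+1} := (a/(√(2^r·(1−a))·(1−s))) · (1 + (T_r + C)·(1 − 1/√2)/(T_{r+1} − T_r)), where r ≥ 1 is an integer. If t is a nonnegative integer with s^t ≤ (T_r − T_{r−1})/(√2·(T_{r+1} − T_r)), then X_r·s^t + (a/√(2^r·(1−a)))·(1 − s^t)/(1 − s) ≤ X_{r+1}. -/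
open Real

/-!
Stage `j` contracts the distance `x` by `x ↦ √(1 - a) * x + a / √(2 ^ j * (1 - a))`, whose fixed
point `f j` satisfies `f (j + 1) = f j / √2`. The doubling point `X` between the stages `j` and
`j + 1` is where `(X - f j) / (T j + C) = (X - f (j + 1)) / (T (j + 1) + C)`, so it exceeds `f j` by
`(T j + C) * σ j` and `f (j + 1)` by `(T (j + 1) + C) * σ j`, with
`σ j = (f j - f (j + 1)) / (T (j + 1) - T j)`. During stage `r` the excess over `f r` therefore has
to shrink from `(T r + C) * σ (r - 1)` to `(T r + C) * σ r`. The common factor `T r + C` cancels,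
which leaves `√(1 - a) ^ t ≤ σ r / σ (r - 1)`.
-/

namespace SRPFL

section Crossing

variable {K : Type*} [Field K]

/-- The point `x` with `(x - f) / τ = (x - f') / τ'`, at which two stages with limiting errors
`f`, `f'` and costs per round `τ`, `τ'` make equally good progress. The formula is the solution of
that equation for distinct nonzero `τ`, `τ'`; at `τ = τ'` it has the junk value `f`. -/
def crossing (f f' τ τ' : K) : K :=
  f + τ * ((f - f') / (τ' - τ))

lemma crossing_sub_left (f f' τ τ' : K) :
    crossing f f' τ τ' - f = τ * ((f - f') / (τ' - τ)) :=
  add_sub_cancel_left _ _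

lemma crossing_sub_right (f f' : K) {τ τ' : K} (h : τ ≠ τ') :
    crossing f f' τ τ' - f' = τ' * ((f - f') / (τ' - τ)) := by
  have hτ : τ' - τ ≠ 0 := sub_ne_zero.2 h.symm
  rw [crossing]
  field_simp
  ring

lemma add_mul_crossing_sub_le_crossing_iff [LinearOrder K] [IsStrictOrderedRing K]
    {f₀ f₁ f₂ τ₀ τ₁ τ₂ q : K} (hf : f₁ < f₀) (hτ : τ₀ < τ₁) (hτ₁ : 0 < τ₁) :
    f₁ + q * (crossing f₀ f₁ τ₀ τ₁ - f₁) ≤ crossing f₁ f₂ τ₁ τ₂ ↔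
      q ≤ (f₁ - f₂) / (τ₂ - τ₁) / ((f₀ - f₁) / (τ₁ - τ₀)) := by
  have hslope : 0 < (f₀ - f₁) / (τ₁ - τ₀) := div_pos (sub_pos.2 hf) (sub_pos.2 hτ)
  rw [← le_sub_iff_add_le', crossing_sub_right _ _ hτ.ne, crossing_sub_left, mul_left_comm,
    mul_le_mul_iff_right₀ hτ₁, le_div_iff₀ hslope]

end Crossing

/-- The limiting error of stage `j` of SRPFL: the fixed point of the contraction
`x ↦ √(1 - a) * x + a / √(2 ^ j * (1 - a))`. -/
noncomputable def errorFloor (a : ℝ) (j : ℕ) : ℝ :=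
  a / (√(2 ^ j * (1 - a)) * (1 - √(1 - a)))

lemma errorFloor_succ (a : ℝ) (j : ℕ) : errorFloor a (j + 1) = errorFloor a j / √2 := by
  rw [errorFloor, errorFloor, pow_succ', mul_assoc, sqrt_mul zero_le_two, mul_assoc, div_div,
    mul_comm √2]

lemma errorFloor_pos {a : ℝ} (ha0 : 0 < a) (ha1 : a < 1) (j : ℕ) : 0 < errorFloor a j := by
  have hs : √(1 - a) < 1 := by rw [sqrt_lt' one_pos]; linarith
  have hnoise : 0 < √(2 ^ j * (1 - a)) := sqrt_pos.2 (mul_pos (by positivity) (sub_pos.2 ha1))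
  exact div_pos ha0 (mul_pos hnoise (sub_pos.2 hs))

lemma errorFloor_succ_lt {a : ℝ} (ha0 : 0 < a) (ha1 : a < 1) (j : ℕ) :
    errorFloor a (j + 1) < errorFloor a j := by
  rw [errorFloor_succ]
  exact div_lt_self (errorFloor_pos ha0 ha1 j) one_lt_sqrt_two

lemma errorFloor_succ_sub_succ (a : ℝ) (j : ℕ) :
    errorFloor a (j + 1) - errorFloor a (j + 2) =
      (errorFloor a j - errorFloor a (j + 1)) / √2 := by
  rw [errorFloor_succ a (j + 1), errorFloor_succ a j, sub_div]

lemma contraction_bound_eq_errorFloor_add (a : ℝ) (j : ℕ) (x q : ℝ) :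
    x * q + a / √(2 ^ j * (1 - a)) * (1 - q) / (1 - √(1 - a)) =
      errorFloor a j + q * (x - errorFloor a j) := by
  rw [errorFloor, ← div_div]
  ring

lemma crossing_errorFloor_succ (a C T T' : ℝ) (j : ℕ) :
    crossing (errorFloor a j) (errorFloor a (j + 1)) (T + C) (T' + C) =
      a / (√(2 ^ j * (1 - a)) * (1 - √(1 - a))) *
        (1 + (T + C) * (1 - 1 / √2) / (T' - T)) := by
  rw [crossing, errorFloor_succ, ← errorFloor, add_sub_add_right_eq_sub]
  ring

end SRPFL

open SRPFL in
theorem srpfl_rounds_per_stage_general {a : ℝ} (ha0 : 0 < a) (ha1 : a < 1)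
    {s : ℝ} (hs : s = √(1 - a)) {C T₀ T₁ T₂ : ℝ} (h01 : T₀ < T₁) (h12 : T₁ ≠ T₂)
    (hC : 0 < T₁ + C) {r : ℕ} (hr : 1 ≤ r) {X X' : ℝ}
    (hX : X = a / (√(2 ^ (r - 1) * (1 - a)) * (1 - s)) *
      (1 + (T₀ + C) * (1 - 1 / √2) / (T₁ - T₀)))
    (hX' : X' = a / (√(2 ^ r * (1 - a)) * (1 - s)) *
      (1 + (T₁ + C) * (1 - 1 / √2) / (T₂ - T₁)))
    (t : ℕ) :
    X * s ^ t + a / √(2 ^ r * (1 - a)) * (1 - s ^ t) / (1 - s) ≤ X' ↔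
      s ^ t ≤ (T₁ - T₀) / (√2 * (T₂ - T₁)) := by
  obtain ⟨j, rfl⟩ := Nat.exists_eq_add_of_le' hr
  rw [Nat.add_sub_cancel, hs, ← crossing_errorFloor_succ] at hX
  rw [hs, ← crossing_errorFloor_succ] at hX'
  have hfloor : errorFloor a (j + 1) < errorFloor a j := errorFloor_succ_lt ha0 ha1 j
  have hratio : (errorFloor a (j + 1) - errorFloor a (j + 2)) / (T₂ + C - (T₁ + C)) /
      ((errorFloor a j - errorFloor a (j + 1)) / (T₁ + C - (T₀ + C))) =
        (T₁ - T₀) / (√2 * (T₂ - T₁)) := by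
    have hgap : errorFloor a j - errorFloor a (j + 1) ≠ 0 := (sub_pos.2 hfloor).ne'
    rw [errorFloor_succ_sub_succ, add_sub_add_right_eq_sub, add_sub_add_right_eq_sub, div_div _ √2,
      div_div_div_cancel_left' _ _ hgap]
  rw [hs, contraction_bound_eq_errorFloor_add, hX, hX',
    add_mul_crossing_sub_le_crossing_iff hfloor (by linarith) hC, hratio]

/-- number of rounds per stage of SRPFL.  If
`s^t ≤ (T_r − T_{r−1})/(√2 (T_{r+1} − T_r))` then `t` contraction steps started
from the doubling point `X_r` reach the next doubling point `X_{r+1}`. -/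
theorem srpfl_rounds_per_stage
    (a : ℝ) (ha0 : 0 < a) (ha : a ≤ 1 / 4)
    (s : ℝ) (hs : s = Real.sqrt (1 - a))
    (C Trm1 Tr Tr1 : ℝ) (hC : 0 ≤ C) (hTrm1 : 0 ≤ Trm1)
    (h1 : Trm1 < Tr) (h2 : Tr < Tr1) (hpos : 0 < Trm1 + C)
    (r : ℕ) (hr : 1 ≤ r)
    (Xr Xr1 : ℝ)
    (hXr : Xr = a / (Real.sqrt (2 ^ (r - 1) * (1 - a)) * (1 - s)) *
      (1 + (Trm1 + C) * (1 - 1 / Real.sqrt 2) / (Tr - Trm1)))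
    (hXr1 : Xr1 = a / (Real.sqrt (2 ^ r * (1 - a)) * (1 - s)) *
      (1 + (Tr + C) * (1 - 1 / Real.sqrt 2) / (Tr1 - Tr)))
    (t : ℕ) (ht : s ^ t ≤ (Tr - Trm1) / (Real.sqrt 2 * (Tr1 - Tr))) :
    Xr * s ^ t + a / Real.sqrt (2 ^ r * (1 - a)) * (1 - s ^ t) / (1 - s) ≤ Xr1 :=
  (srpfl_rounds_per_stage_general ha0 (by linarith) hs h1 h2.ne (by linarith) hr hXr hXr1 t).2 ht
end

section
/- For every integer K ≥ 2, writing N := 2^K and H_j := Σ_{i=1}^{j} 1/i (with H_0 := 0), one has Σ_{j=2}^{K} (H_N − H_{N − N/2^j}) ≤ 1. -/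
open Finset

/-!
Each of the `n` reciprocals in `H_N - H_{N-n}` is at most `1 / (N - n + 1)`. If `n = ⌊N / d⌋`,
then `(d - 1) * n ≤ N - n`, so the difference is at most `1 / (d - 1)`. For `d = 2 ^ j` this is at
most `2 * (1 / 2) ^ j`, and the geometric series starting at `j = 2` sums to `1`.
-/

lemma harmonic_add_sub_harmonic_le (m n : ℕ) :
    harmonic (m + n) - harmonic m ≤ n / (m + 1) := by
  calc harmonic (m + n) - harmonic m
      = ∑ i ∈ range n, ((m + i + 1 : ℕ) : ℚ)⁻¹ := by
        simp only [harmonic, sum_range_add, add_sub_cancel_left]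
    _ ≤ #(range n) • (m + 1 : ℚ)⁻¹ := by
        refine sum_le_card_nsmul _ _ _ fun i _ ↦ ?_
        gcongr
        exact_mod_cast (by omega : m + 1 ≤ m + i + 1)
    _ = n / (m + 1) := by rw [card_range, nsmul_eq_mul, div_eq_mul_inv]

lemma harmonic_sub_harmonic_sub_div_le (N : ℕ) {d : ℕ} (hd : 1 < d) :
    harmonic N - harmonic (N - N / d) ≤ 1 / (d - 1) := by
  obtain ⟨m, hm⟩ := Nat.exists_eq_add_of_le' (Nat.div_le_self N d)
  set n := N / d
  have hdn : (d * n : ℚ) ≤ m + n := by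
    exact_mod_cast (Nat.mul_div_le N d).trans_eq hm
  have hd' : (0 : ℚ) < d - 1 := sub_pos.mpr (by exact_mod_cast hd)
  calc harmonic N - harmonic (N - n)
      = harmonic (m + n) - harmonic m := by rw [hm, Nat.add_sub_cancel]
    _ ≤ n / (m + 1) := harmonic_add_sub_harmonic_le m n
    _ ≤ 1 / (d - 1) := by
        rw [div_le_div_iff₀ (by positivity) hd']
        linarith

lemma harmonic_sub_harmonic_sub_div_two_pow_le (N : ℕ) {j : ℕ} (hj : j ≠ 0) :
    harmonic N - harmonic (N - N / 2 ^ j) ≤ 2 * (1 / 2) ^ j := by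
  have two_le : (2 : ℚ) ≤ 2 ^ j := le_self_pow₀ one_le_two hj
  calc harmonic N - harmonic (N - N / 2 ^ j)
      ≤ 1 / (2 ^ j - 1) := by
        exact_mod_cast harmonic_sub_harmonic_sub_div_le N (Nat.one_lt_two_pow hj)
    _ ≤ 2 / 2 ^ j := by
        rw [div_le_div_iff₀ (by linarith) (by positivity)]
        linarith
    _ = 2 * (1 / 2) ^ j := by rw [one_div_pow, mul_one_div]

theorem dyadic_harmonic_tail_sum_le_one_general (K N : ℕ) :
    ∑ j ∈ Icc 2 K, (harmonic N - harmonic (N - N / 2 ^ j)) ≤ 1 := by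
  calc ∑ j ∈ Icc 2 K, (harmonic N - harmonic (N - N / 2 ^ j))
      ≤ ∑ j ∈ Icc 2 K, 2 * (1 / 2 : ℚ) ^ j := by
        refine sum_le_sum fun j hj ↦ harmonic_sub_harmonic_sub_div_two_pow_le N ?_
        have := (mem_Icc.mp hj).1
        omega
    _ = 2 * ∑ j ∈ Ico 2 (K + 1), (1 / 2 : ℚ) ^ j := by
        rw [← mul_sum, Ico_add_one_right_eq_Icc]
    _ ≤ 2 * ((1 / 2) ^ 2 / (1 - 1 / 2)) := by
        gcongr
        exact geom_sum_Ico_le_of_lt_one (by norm_num) (by norm_num)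
    _ = 1 := by norm_num

/-- for `N = 2^K`, the sum of the tail harmonic differences over the
dyadic early stages is at most 1. -/
theorem dyadic_harmonic_tail_sum_le_one
    (K : ℕ) (hK : 2 ≤ K) (N : ℕ) (hN : N = 2 ^ K)
    (H : ℕ → ℝ) (hH : ∀ j, H j = ∑ i ∈ Finset.Icc 1 j, (1 : ℝ) / i) :
    ∑ j ∈ Finset.Icc 2 K, (H N - H (N - N / 2 ^ j)) ≤ 1 := by
  have hH' (j : ℕ) : H j = harmonic j := by simp [hH, harmonic_eq_sum_Icc]
  simpa only [hH'] using mod_cast dyadic_harmonic_tail_sum_le_one_general K N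
end

section
/- (Wall-clock time of SRPFL; upper bound.) There exists an absolute constant C₀ > 0 with the following property. Let λ > 0, c ≥ 0, a ∈ (0, 1/4], ĉ ∈ (1, √2), let n₀ ≥ 1 and K ≥ 2 be integers, and set N := 2^K·n₀. For 1 ≤ n ≤ N let E_n := (1/λ)·Σ_{i=N−n+1}^{N} 1/i, let C := c/λ, and for 1 ≤ i ≤ K−1 let t^i := 2·log(√2·(E_{n₀·2^{i+1}} − E_{n₀·2^i})/(E_{n₀·2^i} − E_{n₀·2^{i−1}}))/log(1/(1−a)). Define T_SRPFL := Σ_{i=1}^{K−1} t^i·(E_{n₀·2^i} + C) + (E_N + C)·(2·log(1/(ĉ−1))/log(1/(1−a)) + 1). Then T_SRPFL ≤ C₀·(c+1)·log(N)·log(1/(ĉ−1))/(λ·log(1/(1−a))). -/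
open Real Finset

/-! Let `E n` be the mean of the `n`-th smallest of `N` computation times. It is a tail of the
harmonic sum, so `E n - E m` is a block of `n - m` consecutive terms. While `8 u ≤ N`,
the terms behind `E (4 u) - E (2 u)` are `O(1 / N)`, so this increment is at most four times
`E (2 u) - E u`, and the stage takes boundedly many rounds of cost at most `(1 + c) / λ` each, up to
the factor `1 / log (1 / (1 - a))`. Only the last doubling, from `N / 2` to `N` nodes, reaches the
large terms of the harmonic sum; there the ratio of the increments is `O(log N)`, and so is its
logarithm. The number of doublings and the cost of a round with all `N` nodes, in units of
`(1 + c) / λ`, are `O(log N)` as well. -/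

section HarmonicBlock

variable {m n : ℕ}

lemma sum_Ioc_one_div_le (hm : 0 < m) (hmn : m ≤ n) :
    ∑ i ∈ Ioc m n, (1 : ℝ) / i ≤ (n - m) / m := by
  calc ∑ i ∈ Ioc m n, (1 : ℝ) / i ≤ #(Ioc m n) • ((1 : ℝ) / m) := by
        refine sum_le_card_nsmul _ _ _ fun i hi ↦ ?_
        have := (mem_Ioc.mp hi).1.le
        gcongr
    _ = (n - m) / m := by
        rw [Nat.card_Ioc, nsmul_eq_mul, Nat.cast_sub hmn, mul_one_div]

lemma le_sum_Ioc_one_div (hmn : m ≤ n) :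
    ((n : ℝ) - m) / n ≤ ∑ i ∈ Ioc m n, (1 : ℝ) / i := by
  calc ((n : ℝ) - m) / n = #(Ioc m n) • ((1 : ℝ) / n) := by
        rw [Nat.card_Ioc, nsmul_eq_mul, Nat.cast_sub hmn, mul_one_div]
    _ ≤ ∑ i ∈ Ioc m n, (1 : ℝ) / i := by
        refine card_nsmul_le_sum _ _ _ fun i hi ↦ ?_
        obtain ⟨hmi, hin⟩ := mem_Ioc.mp hi
        have : 0 < i := by omega
        gcongr

end HarmonicBlock

/-- The expectation of the `n`-th smallest of `N` independent exponential variables of rate `lam`,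
given by its harmonic-sum formula; meaningful for `n ≤ N`. -/
noncomputable def expOrderStatMean (lam : ℝ) (N n : ℕ) : ℝ :=
  (1 / lam) * ∑ i ∈ Icc (N - n + 1) N, (1 : ℝ) / i

section ExpOrderStatMean

variable {lam : ℝ} {N m n u : ℕ}

lemma expOrderStatMean_zero : expOrderStatMean lam N 0 = 0 := by
  simp [expOrderStatMean]

lemma expOrderStatMean_sub (hmn : m ≤ n) (hn : n ≤ N) :
    expOrderStatMean lam N n - expOrderStatMean lam N m =
      (∑ i ∈ Ioc (N - n) (N - m), (1 : ℝ) / i) / lam := by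
  have hsplit := sum_Ioc_consecutive (fun i : ℕ ↦ (1 : ℝ) / i)
    (show N - n ≤ N - m by omega) (Nat.sub_le N m)
  simp only [expOrderStatMean, Icc_add_one_left_eq_Ioc]
  rw [← hsplit]
  ring

lemma expOrderStatMean_sub_le (hlam : 0 < lam) (hmn : m ≤ n) (hn : n < N) :
    expOrderStatMean lam N n - expOrderStatMean lam N m ≤ (n - m) / (N - n) / lam := by
  have hblock := sum_Ioc_one_div_le (show 0 < N - n by omega) (show N - n ≤ N - m by omega)
  rw [Nat.cast_sub hn.le, Nat.cast_sub (hmn.trans hn.le), sub_sub_sub_cancel_left] at hblock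
  rw [expOrderStatMean_sub hmn hn.le]
  gcongr

lemma le_expOrderStatMean_sub (hlam : 0 < lam) (hmn : m ≤ n) (hn : n ≤ N) :
    ((n : ℝ) - m) / (N - m) / lam ≤ expOrderStatMean lam N n - expOrderStatMean lam N m := by
  have hblock := le_sum_Ioc_one_div (show N - n ≤ N - m by omega)
  rw [Nat.cast_sub hn, Nat.cast_sub (hmn.trans hn), sub_sub_sub_cancel_left] at hblock
  rw [expOrderStatMean_sub hmn hn]
  gcongr

lemma expOrderStatMean_strictMonoOn (hlam : 0 < lam) :
    StrictMonoOn (expOrderStatMean lam N) (Set.Iic N) := by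
  intro m _ n hn hmn
  have hmn' : (m : ℝ) < n := by exact_mod_cast hmn
  have hmN : (m : ℝ) < N := by exact_mod_cast hmn.trans_le hn
  refine sub_pos.mp (lt_of_lt_of_le ?_ (le_expOrderStatMean_sub hlam hmn.le hn))
  exact div_pos (div_pos (sub_pos.mpr hmn') (sub_pos.mpr hmN)) hlam

lemma expOrderStatMean_nonneg (hlam : 0 < lam) : 0 ≤ expOrderStatMean lam N n := by
  unfold expOrderStatMean
  positivity

lemma expOrderStatMean_le_one_div (hlam : 0 < lam) (hn : 2 * n ≤ N) :
    expOrderStatMean lam N n ≤ 1 / lam := by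
  rcases n.eq_zero_or_pos with rfl | hpos
  · rw [expOrderStatMean_zero]
    positivity
  · have hn' : 2 * (n : ℝ) ≤ N := by exact_mod_cast hn
    have hpos' : (0 : ℝ) < n := by exact_mod_cast hpos
    have hbound := expOrderStatMean_sub_le hlam n.zero_le (show n < N by omega)
    rw [expOrderStatMean_zero, sub_zero, Nat.cast_zero, sub_zero] at hbound
    refine hbound.trans ?_
    gcongr
    rw [div_le_one₀] <;> linarith

lemma expOrderStatMean_self_le (hlam : 0 < lam) :
    expOrderStatMean lam N N ≤ (1 + log N) / lam := by
  have hharmonic := harmonic_le_one_add_log N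
  rw [harmonic_eq_sum_Icc] at hharmonic
  push_cast at hharmonic
  simp only [expOrderStatMean, Nat.sub_self, zero_add, one_div, inv_mul_eq_div]
  gcongr

lemma expOrderStatMean_four_mul_sub_le (hlam : 0 < lam) (hu : 0 < u) (hN : 7 * u ≤ N) :
    expOrderStatMean lam N (4 * u) - expOrderStatMean lam N (2 * u) ≤
      4 * (expOrderStatMean lam N (2 * u) - expOrderStatMean lam N u) := by
  have hu' : (0 : ℝ) < u := by exact_mod_cast hu
  have hN' : 7 * (u : ℝ) ≤ N := by exact_mod_cast hN
  calc expOrderStatMean lam N (4 * u) - expOrderStatMean lam N (2 * u)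
      ≤ (((4 * u : ℕ) : ℝ) - (2 * u : ℕ)) / (N - (4 * u : ℕ)) / lam :=
        expOrderStatMean_sub_le hlam (by omega) (by omega)
    _ ≤ 4 * ((((2 * u : ℕ) : ℝ) - u) / (N - u) / lam) := by
        rw [← mul_div_assoc]
        gcongr
        push_cast
        rw [← mul_div_assoc, div_le_div_iff₀ (by linarith) (by linarith)]
        nlinarith
    _ ≤ 4 * (expOrderStatMean lam N (2 * u) - expOrderStatMean lam N u) := by
        gcongr
        exact le_expOrderStatMean_sub hlam (by omega) (by omega)

lemma expOrderStatMean_four_mul_self_sub_le (hlam : 0 < lam) (hu : 0 < u) :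
    expOrderStatMean lam (4 * u) (4 * u) - expOrderStatMean lam (4 * u) (2 * u) ≤
      3 * (1 + log (4 * u : ℕ)) *
        (expOrderStatMean lam (4 * u) (2 * u) - expOrderStatMean lam (4 * u) u) := by
  have hlower : 1 / 3 / lam ≤
      expOrderStatMean lam (4 * u) (2 * u) - expOrderStatMean lam (4 * u) u := by
    convert le_expOrderStatMean_sub hlam (show u ≤ 2 * u by omega)
      (show 2 * u ≤ 4 * u by omega) using 2
    have : (0 : ℝ) < u := by exact_mod_cast hu
    push_cast
    field_simp
    ring
  calc expOrderStatMean lam (4 * u) (4 * u) - expOrderStatMean lam (4 * u) (2 * u)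
      ≤ expOrderStatMean lam (4 * u) (4 * u) := sub_le_self _ (expOrderStatMean_nonneg hlam)
    _ ≤ (1 + log (4 * u : ℕ)) / lam := expOrderStatMean_self_le hlam
    _ = 3 * (1 + log (4 * u : ℕ)) * (1 / 3 / lam) := by ring
    _ ≤ 3 * (1 + log (4 * u : ℕ)) *
        (expOrderStatMean lam (4 * u) (2 * u) - expOrderStatMean lam (4 * u) u) := by
        have := log_natCast_nonneg (4 * u)
        gcongr

end ExpOrderStatMean

section Logarithms

lemma sqrt_two_le_three_halves : √2 ≤ 3 / 2 :=
  sqrt_le_iff.mpr (by norm_num)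

lemma log_sqrt_two_mul_div_le {x y s : ℝ} (hx : 0 < x) (hy : 0 < y) (hs : 0 ≤ s)
    (hxy : x ≤ 4 * (1 + s) * y) : log (√2 * x / y) ≤ 2 + s := by
  have hlog : log (√2 * 4) ≤ 2 := by
    rw [log_mul (by positivity) (by norm_num), log_sqrt (by norm_num),
      show (4 : ℝ) = 2 ^ 2 by norm_num, log_pow]
    push_cast
    linarith [log_two_lt_d9]
  have hlogs : log (1 + s) ≤ s := by
    linarith [log_le_sub_one_of_pos (show 0 < 1 + s by linarith)]
  calc log (√2 * x / y) ≤ log (√2 * 4 * (1 + s)) := by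
        gcongr
        rw [div_le_iff₀ hy]
        calc √2 * x ≤ √2 * (4 * (1 + s) * y) := by gcongr
          _ = √2 * 4 * (1 + s) * y := by ring
    _ = log (√2 * 4) + log (1 + s) := log_mul (by positivity) (by positivity)
    _ ≤ 2 + s := add_le_add hlog hlogs

lemma log_one_div_one_sub_pos {a : ℝ} (ha : 0 < a) (ha1 : a < 1) : 0 < log (1 / (1 - a)) :=
  log_pos ((one_lt_div (by linarith)).mpr (by linarith))

lemma log_one_div_one_sub_le_one {a : ℝ} (ha : a ≤ 1 / 2) : log (1 / (1 - a)) ≤ 1 := by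
  have hle : 1 / (1 - a) ≤ 2 := (div_le_iff₀ (by linarith)).mpr (by linarith)
  linarith [log_le_sub_one_of_pos (show 0 < 1 / (1 - a) from one_div_pos.mpr (by linarith))]

lemma one_half_le_log_one_div_sub_one {x : ℝ} (hx : 1 < x) (hx' : x ≤ 3 / 2) :
    1 / 2 ≤ log (1 / (x - 1)) := by
  have hle : 2 ≤ 1 / (x - 1) := (le_div_iff₀ (by linarith)).mpr (by linarith)
  linarith [log_le_log two_pos hle, log_two_gt_d9]

lemma natCast_le_two_mul_log_two_pow_mul {n : ℕ} (hn : 0 < n) (k : ℕ) :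
    (k : ℝ) ≤ 2 * log (2 ^ k * n : ℕ) := by
  have hlog : k * log 2 ≤ log (2 ^ k * n : ℕ) := by
    rw [← log_pow]
    gcongr
    exact_mod_cast Nat.le_mul_of_pos_right _ hn
  nlinarith [log_two_gt_d9, show (0 : ℝ) ≤ k from k.cast_nonneg]

end Logarithms

/-- The number of rounds that SRPFL with `N` nodes spends with `2 * u` participants before doubling
them to `4 * u`. The paper's `t^i` is the case `u = n₀ * 2 ^ (i - 1)`, `ℓ = log (1 / (1 - a))`. -/
noncomputable def doublingRounds (lam ℓ : ℝ) (N u : ℕ) : ℝ :=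
  2 * log (√2 * (expOrderStatMean lam N (4 * u) - expOrderStatMean lam N (2 * u)) /
    (expOrderStatMean lam N (2 * u) - expOrderStatMean lam N u)) / ℓ

/-- The expected duration of the SRPFL stage with `2 * u` participants, at communication cost
`c / lam` per round. -/
noncomputable def stageTime (lam c ℓ : ℝ) (N u : ℕ) : ℝ :=
  doublingRounds lam ℓ N u * (expOrderStatMean lam N (2 * u) + c / lam)

section StageTime

variable {lam c ℓ s : ℝ} {N u n₀ : ℕ}

lemma doublingRounds_le (hlam : 0 < lam) (hℓ : 0 ≤ ℓ) (hs : 0 ≤ s) (hu : 0 < u) (hN : 4 * u ≤ N)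
    (hgain : expOrderStatMean lam N (4 * u) - expOrderStatMean lam N (2 * u) ≤
      4 * (1 + s) * (expOrderStatMean lam N (2 * u) - expOrderStatMean lam N u)) :
    doublingRounds lam ℓ N u ≤ 2 * (2 + s) / ℓ := by
  have hmono := expOrderStatMean_strictMonoOn (N := N) hlam
  have h4 : expOrderStatMean lam N (2 * u) < expOrderStatMean lam N (4 * u) :=
    hmono (Set.mem_Iic.mpr (by omega)) (Set.mem_Iic.mpr hN) (by omega)
  have h2 : expOrderStatMean lam N u < expOrderStatMean lam N (2 * u) :=
    hmono (Set.mem_Iic.mpr (by omega)) (Set.mem_Iic.mpr (by omega)) (by omega)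
  unfold doublingRounds
  gcongr
  exact log_sqrt_two_mul_div_le (sub_pos.mpr h4) (sub_pos.mpr h2) hs hgain

lemma stageTime_le (hlam : 0 < lam) (hc : 0 ≤ c) (hℓ : 0 ≤ ℓ) (hs : 0 ≤ s) (hN : 4 * u ≤ N)
    (hrounds : doublingRounds lam ℓ N u ≤ 2 * (2 + s) / ℓ) :
    stageTime lam c ℓ N u ≤ 2 * (2 + s) / ℓ * ((1 + c) / lam) := by
  have hround : expOrderStatMean lam N (2 * u) + c / lam ≤ (1 + c) / lam := by
    rw [add_div]
    gcongr
    exact expOrderStatMean_le_one_div hlam (by omega)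
  have hround_nonneg : 0 ≤ expOrderStatMean lam N (2 * u) + c / lam :=
    add_nonneg (expOrderStatMean_nonneg hlam) (by positivity)
  exact mul_le_mul hrounds hround hround_nonneg (by positivity)

lemma stageTime_le_of_seven_mul_le (hlam : 0 < lam) (hc : 0 ≤ c) (hℓ : 0 ≤ ℓ) (hu : 0 < u)
    (hN : 7 * u ≤ N) : stageTime lam c ℓ N u ≤ 4 / ℓ * ((1 + c) / lam) := by
  have hN4 : 4 * u ≤ N := by omega
  have hgain := expOrderStatMean_four_mul_sub_le hlam hu hN
  convert stageTime_le hlam hc hℓ le_rfl hN4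
    (doublingRounds_le hlam hℓ le_rfl hu hN4 (by simpa only [add_zero, mul_one] using hgain))
    using 3
  norm_num

lemma stageTime_four_mul_le (hlam : 0 < lam) (hc : 0 ≤ c) (hℓ : 0 ≤ ℓ) (hu : 0 < u) :
    stageTime lam c ℓ (4 * u) u ≤ 2 * (2 + log (4 * u : ℕ)) / ℓ * ((1 + c) / lam) := by
  have hlog : 0 ≤ log (4 * u : ℕ) := log_natCast_nonneg _
  have hgain_nonneg :
      0 ≤ expOrderStatMean lam (4 * u) (2 * u) - expOrderStatMean lam (4 * u) u :=
    sub_nonneg.mpr <| (expOrderStatMean_strictMonoOn hlam).monotoneOn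
      (Set.mem_Iic.mpr (by omega)) (Set.mem_Iic.mpr (by omega)) (by omega)
  refine stageTime_le hlam hc hℓ hlog le_rfl (doublingRounds_le hlam hℓ hlog hu le_rfl ?_)
  refine (expOrderStatMean_four_mul_self_sub_le hlam hu).trans ?_
  gcongr
  norm_num

lemma sum_stageTime_le (hlam : 0 < lam) (hc : 0 ≤ c) (hℓ : 0 ≤ ℓ) (hn₀ : 0 < n₀) (M : ℕ)
    (hN : N = 2 ^ (M + 2) * n₀) :
    ∑ j ∈ range (M + 1), stageTime lam c ℓ N (n₀ * 2 ^ j) ≤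
      (4 * (M + 1) + 2 * log N) / ℓ * ((1 + c) / lam) := by
  have hearly : ∀ j ∈ range M, stageTime lam c ℓ N (n₀ * 2 ^ j) ≤ 4 / ℓ * ((1 + c) / lam) := by
    intro j hj
    refine stageTime_le_of_seven_mul_le hlam hc hℓ (by positivity) ?_
    have hjM : j + 3 ≤ M + 2 := by linarith [mem_range.mp hj]
    calc 7 * (n₀ * 2 ^ j) ≤ 8 * (n₀ * 2 ^ j) := by gcongr; norm_num
      _ = 2 ^ (j + 3) * n₀ := by ring
      _ ≤ 2 ^ (M + 2) * n₀ := by gcongr; norm_num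
      _ = N := hN.symm
  have hN4 : N = 4 * (n₀ * 2 ^ M) := by rw [hN]; ring
  have hlast : stageTime lam c ℓ N (n₀ * 2 ^ M) ≤
      2 * (2 + log N) / ℓ * ((1 + c) / lam) := by
    rw [hN4]
    exact stageTime_four_mul_le hlam hc hℓ (by positivity)
  calc ∑ j ∈ range (M + 1), stageTime lam c ℓ N (n₀ * 2 ^ j)
      ≤ M * (4 / ℓ * ((1 + c) / lam)) + 2 * (2 + log N) / ℓ * ((1 + c) / lam) := by
        rw [sum_range_succ]
        simpa only [card_range, nsmul_eq_mul] using
          add_le_add (sum_le_card_nsmul _ _ _ hearly) hlast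
    _ = (4 * (M + 1) + 2 * log N) / ℓ * ((1 + c) / lam) := by ring

lemma expOrderStatMean_self_add_le (hlam : 0 < lam) (hc : 0 ≤ c) (hN : 1 ≤ log N) :
    expOrderStatMean lam N N + c / lam ≤ 2 * log N * ((1 + c) / lam) := by
  calc expOrderStatMean lam N N + c / lam ≤ (1 + log N) / lam + c / lam := by
        gcongr
        exact expOrderStatMean_self_le hlam
    _ = (1 + log N + c) / lam := by ring
    _ ≤ 2 * log N * (1 + c) / lam := by
        gcongr
        nlinarith
    _ = 2 * log N * ((1 + c) / lam) := mul_div_assoc _ _ _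

lemma sum_mul_add_eq_sum_stageTime {E t : ℕ → ℝ} {M : ℕ} (hn₀ : 1 ≤ n₀)
    (hN : 2 ^ (M + 2) * n₀ ≤ N) (hE : ∀ n, 1 ≤ n → n ≤ N → E n = expOrderStatMean lam N n)
    (ht : ∀ i, 1 ≤ i → i ≤ M + 1 →
      t i = 2 * log (√2 * (E (n₀ * 2 ^ (i + 1)) - E (n₀ * 2 ^ i)) /
        (E (n₀ * 2 ^ i) - E (n₀ * 2 ^ (i - 1)))) / ℓ) :
    ∑ i ∈ Icc 1 (M + 1), t i * (E (n₀ * 2 ^ i) + c / lam) =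
      ∑ j ∈ range (M + 1), stageTime lam c ℓ N (n₀ * 2 ^ j) := by
  have hEpow : ∀ k ≤ M + 2, E (n₀ * 2 ^ k) = expOrderStatMean lam N (n₀ * 2 ^ k) := by
    intro k hk
    refine hE _ (Nat.mul_pos hn₀ (by positivity)) (le_trans ?_ hN)
    rw [mul_comm]
    gcongr
    norm_num
  rw [← Ico_add_one_right_eq_Icc, sum_Ico_eq_sum_range]
  refine sum_congr rfl fun j hj ↦ ?_
  have hjM : j < M + 1 := mem_range.mp hj
  rw [add_comm 1 j, ht (j + 1) (by omega) hjM, Nat.add_sub_cancel, hEpow _ (by omega),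
    hEpow _ (by omega), hEpow _ (by omega), show n₀ * 2 ^ (j + 1) = 2 * (n₀ * 2 ^ j) by ring,
    show n₀ * 2 ^ (j + 1 + 1) = 4 * (n₀ * 2 ^ j) by ring, stageTime, doublingRounds]

end StageTime

/-- upper bound on the expected wall-clock time of SRPFL. -/
theorem srpfl_wall_clock_upper_bound :
    ∃ C₀ : ℝ, 0 < C₀ ∧
      ∀ (lam c a chat : ℝ) (n₀ K N : ℕ),
        0 < lam → 0 ≤ c → 0 < a → a ≤ 1 / 4 → 1 < chat → chat < Real.sqrt 2 →
        1 ≤ n₀ → 2 ≤ K → N = 2 ^ K * n₀ →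
        ∀ E : ℕ → ℝ,
          (∀ n, 1 ≤ n → n ≤ N →
            E n = (1 / lam) * ∑ i ∈ Finset.Icc (N - n + 1) N, (1 : ℝ) / i) →
        ∀ C : ℝ, C = c / lam →
        ∀ t : ℕ → ℝ,
          (∀ i, 1 ≤ i → i ≤ K - 1 →
            t i = 2 * Real.log (Real.sqrt 2 * (E (n₀ * 2 ^ (i + 1)) - E (n₀ * 2 ^ i)) /
                (E (n₀ * 2 ^ i) - E (n₀ * 2 ^ (i - 1)))) / Real.log (1 / (1 - a))) →
        ∀ T : ℝ,
          T = (∑ i ∈ Finset.Icc 1 (K - 1), t i * (E (n₀ * 2 ^ i) + C)) +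
              (E N + C) * (2 * Real.log (1 / (chat - 1)) / Real.log (1 / (1 - a)) + 1) →
        T ≤ C₀ * (c + 1) * Real.log N * Real.log (1 / (chat - 1)) /
              (lam * Real.log (1 / (1 - a))) := by
  refine ⟨28, by norm_num, ?_⟩
  rintro lam c a chat n₀ K N hlam hc ha ha4 hchat hchat2 hn₀ hK hN E hE C rfl t ht T rfl
  obtain ⟨M, rfl⟩ := Nat.exists_eq_add_of_le' hK
  have hℓ := log_one_div_one_sub_pos ha (by linarith)
  have hℓ1 := log_one_div_one_sub_le_one (show a ≤ 1 / 2 by linarith)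
  have hL := one_half_le_log_one_div_sub_one hchat (hchat2.le.trans sqrt_two_le_three_halves)
  have hM : ((M + 2 : ℕ) : ℝ) ≤ 2 * log N :=
    hN ▸ natCast_le_two_mul_log_two_pow_mul hn₀ (M + 2)
  push_cast at hM
  set ℓ := log (1 / (1 - a))
  set L := log (1 / (chat - 1))
  have hlogN : 1 ≤ log N := by linarith [show (0 : ℝ) ≤ M from M.cast_nonneg]
  have hsum := sum_stageTime_le hlam hc hℓ.le hn₀ M hN
  rw [← sum_mul_add_eq_sum_stageTime hn₀ hN.ge hE ht] at hsum
  have hNpos : 1 ≤ N := hN ▸ Nat.mul_pos (by positivity) hn₀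
  have hlast : E N + c / lam ≤ 2 * log N * ((1 + c) / lam) :=
    hE N hNpos le_rfl ▸ expOrderStatMean_self_add_le hlam hc hlogN
  have hlogNL : log N ≤ 2 * log N * L := by nlinarith
  calc _ ≤ (4 * (M + 1) + 2 * log N) / ℓ * ((1 + c) / lam) +
        2 * log N * ((1 + c) / lam) * (2 * L / ℓ + 1) := by gcongr; exact hsum
    _ ≤ 20 * log N * L / ℓ * ((1 + c) / lam) +
        2 * log N * ((1 + c) / lam) * (4 * L / ℓ) := by
      gcongr
      · linarith
      · rw [div_add_one hℓ.ne']
        gcongr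
        linarith
    _ = 28 * (c + 1) * log N * L / (lam * ℓ) := by field_simp; ring
end
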